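/- For every real x ≥ 3, the function f₁(x) := Σ_{r=1}^∞ x^{1-2r}/(2r(2r-1)) satisfies 0 < f₁(x) ≤ 0.6/x. -/

import Mathlib

/-!
Since `2 r (2 r - 1) ≥ 2` for `r ≥ 1`, the series is dominated termwise by half of the geometric
series `∑ x^(1 - 2 r) = x / (x² - 1)`. The resulting bound `x / (2 (x² - 1))` is at most `0.6 / x`
as soon as `x² ≥ 6`.
-/

section GeometricDiv

variable {q c : ℝ} {d : ℕ → ℝ}

lemma geometric_div_le (hq : 0 ≤ q) (hc : 0 < c) (hd : ∀ n, c ≤ d n) (n : ℕ) :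
    q ^ n / d n ≤ q ^ n / c :=
  div_le_div_of_nonneg_left (pow_nonneg hq n) hc (hd n)

lemma geometric_div_nonneg (hq : 0 ≤ q) (hc : 0 < c) (hd : ∀ n, c ≤ d n) (n : ℕ) :
    0 ≤ q ^ n / d n :=
  div_nonneg (pow_nonneg hq n) (hc.le.trans (hd n))

lemma summable_geometric_div (hq : 0 ≤ q) (hq' : q < 1) (hc : 0 < c) (hd : ∀ n, c ≤ d n) :
    Summable fun n ↦ q ^ n / d n :=
  .of_nonneg_of_le (geometric_div_nonneg hq hc hd) (geometric_div_le hq hc hd)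
    ((summable_geometric_of_lt_one hq hq').div_const c)

lemma tsum_geometric_div_pos (hq : 0 ≤ q) (hq' : q < 1) (hc : 0 < c) (hd : ∀ n, c ≤ d n) :
    0 < ∑' n, q ^ n / d n := by
  have head_pos : 0 < q ^ 0 / d 0 := by
    rw [pow_zero]
    exact one_div_pos.2 (hc.trans_le (hd 0))
  exact (summable_geometric_div hq hq' hc hd).tsum_pos (geometric_div_nonneg hq hc hd) 0 head_pos

lemma tsum_geometric_div_le (hq : 0 ≤ q) (hq' : q < 1) (hc : 0 < c) (hd : ∀ n, c ≤ d n) :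
    ∑' n, q ^ n / d n ≤ (1 - q)⁻¹ / c :=
  hasSum_le (geometric_div_le hq hc hd) (summable_geometric_div hq hq' hc hd).hasSum
    ((hasSum_geometric_of_lt_one hq hq').div_const c)

end GeometricDiv

lemma zpow_one_sub_two_mul_succ {K : Type*} [DivisionRing K] (x : K) (n : ℕ) :
    x ^ (1 - 2 * ((n : ℤ) + 1)) = x⁻¹ * ((x ^ 2)⁻¹) ^ n := by
  have exponent_eq : 1 - 2 * ((n : ℤ) + 1) = -((2 * n + 1 : ℕ) : ℤ) := by
    push_cast
    ring
  rw [exponent_eq, zpow_neg, zpow_natCast, pow_succ, pow_mul, mul_inv_rev, inv_pow]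

lemma two_le_two_mul_succ_mul_two_mul_succ_sub_one {R : Type*} [CommRing R] [LinearOrder R]
    [IsStrictOrderedRing R] (n : ℕ) :
    (2 : R) ≤ 2 * ((n : R) + 1) * (2 * ((n : R) + 1) - 1) := by
  have : (0 : R) ≤ n := n.cast_nonneg
  nlinarith

theorem stmt_4_general (x : ℝ) (hx : 1 < x) :
    0 < (∑' n : ℕ,
        x ^ (1 - 2 * ((n : ℤ) + 1)) / ((2 * ((n : ℝ) + 1)) * (2 * ((n : ℝ) + 1) - 1))) ∧
    (∑' n : ℕ,
        x ^ (1 - 2 * ((n : ℤ) + 1)) / ((2 * ((n : ℝ) + 1)) * (2 * ((n : ℝ) + 1) - 1)))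
      ≤ x / (2 * (x ^ 2 - 1)) := by
  have x_pos : 0 < x := one_pos.trans hx
  have one_lt_sq : 1 < x ^ 2 := one_lt_pow₀ hx two_ne_zero
  have ratio_nonneg : 0 ≤ (x ^ 2)⁻¹ := by positivity
  have ratio_lt_one : (x ^ 2)⁻¹ < 1 := inv_lt_one_of_one_lt₀ one_lt_sq
  simp only [zpow_one_sub_two_mul_succ, mul_div_assoc, tsum_mul_left]
  constructor
  · exact mul_pos (inv_pos.2 x_pos) (tsum_geometric_div_pos ratio_nonneg ratio_lt_one two_pos
      two_le_two_mul_succ_mul_two_mul_succ_sub_one)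
  · calc
      _ ≤ x⁻¹ * ((1 - (x ^ 2)⁻¹)⁻¹ / 2) := by
        gcongr
        exact tsum_geometric_div_le ratio_nonneg ratio_lt_one two_pos
          two_le_two_mul_succ_mul_two_mul_succ_sub_one
      _ = x / (2 * (x ^ 2 - 1)) := by
        have : x ^ 2 - 1 ≠ 0 := (sub_pos.2 one_lt_sq).ne'
        field_simp

theorem stmt_4 (x : ℝ) (hx : 3 ≤ x) :
    0 < (∑' n : ℕ,
        x ^ (1 - 2 * ((n : ℤ) + 1)) / ((2 * ((n : ℝ) + 1)) * (2 * ((n : ℝ) + 1) - 1))) ∧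
    (∑' n : ℕ,
        x ^ (1 - 2 * ((n : ℤ) + 1)) / ((2 * ((n : ℝ) + 1)) * (2 * ((n : ℝ) + 1) - 1)))
      ≤ 0.6 / x := by
  have bound_le : x / (2 * (x ^ 2 - 1)) ≤ 0.6 / x := by
    rw [div_le_div_iff₀ (by nlinarith) (by linarith)]
    nlinarith
  exact (stmt_4_general x (by linarith)).imp_right (·.trans bound_le)
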